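/- arXiv:2008.00117 — 2 statements merged into one kernel-verified Lean document; each statement's English description precedes it below -/
import Mathlib

section
/- Let Ω ⊂ ℝ^N be open and bounded with 0 ∈ Ω, N ≥ 2, 1 < q < N, and let a: closure(Ω) → [0,∞) be continuous with a(λx) ≤ a(x) for all λ ∈ (0,1] and x ∈ closure(Ω). Then for every u ∈ C_0^∞(Ω): ∫_Ω a(x) |u(x)|^q / |x|^q dx ≤ (q/(N-q))^q ∫_Ω a(x) |∇u(x)|^q dx. -/
open MeasureTheory

/-!
The fundamental theorem of calculus along the ray from `x` to infinity gives
`|u x| / |x| ≤ ∫₁^∞ |∇u (t x)| dt`. Since `a x ≤ a (t x)` for `t ≥ 1`, the factor `a x ^ (1 / q)`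
may be moved inside this integral as `a (t x) ^ (1 / q)`, so it suffices to bound the `L^q` norm of
`x ↦ ∫₁^∞ f (t x) dt` for `f = a ^ (1 / q) |∇u|`. By Minkowski's integral inequality and the
scaling of Lebesgue measure it is at most `∫₁^∞ t ^ (-N / q) dt = q / (N - q)` times that of `f`.
-/

open Set Module Function
open scoped ENNReal

section Minkowski

variable {α β : Type*} [MeasurableSpace α] [MeasurableSpace β] {q : ℝ}

theorem rpow_lintegral_le_weight_mul_lintegral {μ : Measure α} {f c : α → ℝ≥0∞} (hq : 1 ≤ q)
    (hf : AEMeasurable f μ) (hc : AEMeasurable c μ) (hc_top : ∀ᵐ a ∂μ, c a ≠ ∞)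
    (hfc : ∀ᵐ a ∂μ, c a = 0 → f a = 0) :
    (∫⁻ a, f a ∂μ) ^ q ≤ (∫⁻ a, c a ∂μ) ^ (q - 1) * ∫⁻ a, c a ^ (1 - q) * f a ^ q ∂μ := by
  have hq0 : 0 < q := by linarith
  have hsplit : ∀ᵐ a ∂μ, f a = c a ^ ((q - 1) / q) * (c a ^ (1 - q) * f a ^ q) ^ (1 / q) := by
    filter_upwards [hc_top, hfc] with a hca_top hfa
    rcases eq_or_ne (c a) 0 with hca | hca
    · simp [hfa hca, hq0]
    · rw [ENNReal.mul_rpow_of_nonneg _ _ (by positivity), ← ENNReal.rpow_mul, ← ENNReal.rpow_mul,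
        mul_one_div_cancel hq0.ne', ENNReal.rpow_one, ← mul_assoc,
        ← ENNReal.rpow_add _ _ hca hca_top, ← mul_div_assoc, mul_one, ← add_div]
      simp
  have hölder := ENNReal.lintegral_mul_norm_pow_le hc ((hc.pow_const (1 - q)).mul (hf.pow_const q))
    (p := (q - 1) / q) (q := 1 / q) (div_nonneg (by linarith) hq0.le) (by positivity)
    (by field_simp; ring)
  rw [lintegral_congr_ae hsplit]
  refine (ENNReal.rpow_le_rpow hölder hq0.le).trans_eq ?_
  rw [ENNReal.mul_rpow_of_nonneg _ _ hq0.le, ← ENNReal.rpow_mul, ← ENNReal.rpow_mul,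
    div_mul_cancel₀ _ hq0.ne', div_mul_cancel₀ _ hq0.ne', ENNReal.rpow_one]
  rfl

variable {μ : Measure α} {ν : Measure β} [SFinite μ] [SFinite ν]

theorem ae_ae_eq_zero_of_lintegral_eq_zero {f : α → β → ℝ≥0∞} (hf : Measurable (uncurry f)) :
    ∀ᵐ x ∂μ, ∀ᵐ y ∂ν, ∫⁻ x', f x' y ∂μ = 0 → f x y = 0 := by
  have hmeas : MeasurableSet {p : α × β | ∫⁻ x', f x' p.2 ∂μ = 0 → f p.1 p.2 = 0} :=
    (measurableSet_eq_fun (hf.lintegral_prod_left'.comp measurable_snd) measurable_const).imp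
      (measurableSet_eq_fun hf measurable_const)
  refine (Measure.ae_ae_comm hmeas).2 (.of_forall fun y => ?_)
  by_cases hy : ∫⁻ x', f x' y ∂μ = 0
  · exact ((lintegral_eq_zero_iff hf.of_uncurry_right).1 hy).mono fun x hx _ => hx
  · exact .of_forall fun _ h => absurd h hy

theorem lintegral_rpow_lintegral_le_of_measurable {f : α → β → ℝ≥0∞} (hq : 1 ≤ q)
    (hf : Measurable (uncurry f)) :
    ∫⁻ x, (∫⁻ y, f x y ∂ν) ^ q ∂μ ≤ (∫⁻ y, (∫⁻ x, f x y ^ q ∂μ) ^ (1 / q) ∂ν) ^ q := by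
  have hq0 : 0 < q := by linarith
  set c : β → ℝ≥0∞ := fun y => (∫⁻ x, f x y ^ q ∂μ) ^ (1 / q) with hc_def
  have hc : Measurable c := (hf.pow_const q).lintegral_prod_left'.pow_const (1 / q)
  have hc_rpow (y : β) : ∫⁻ x, f x y ^ q ∂μ = c y ^ q := by
    rw [hc_def, ← ENNReal.rpow_mul, one_div_mul_cancel hq0.ne', ENNReal.rpow_one]
  rcases eq_or_ne (∫⁻ y, c y ∂ν) ∞ with hC | hC
  · simp [hC, hq0]
  have hc_top : ∀ᵐ y ∂ν, c y ≠ ∞ := (ae_lt_top hc hC).mono fun _ h => h.ne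
  have hfc : ∀ᵐ x ∂μ, ∀ᵐ y ∂ν, c y = 0 → f x y = 0 := by
    simpa [hc_rpow, hq0, hq0.not_gt] using
      ae_ae_eq_zero_of_lintegral_eq_zero (μ := μ) (ν := ν) (f := fun x y => f x y ^ q)
        (hf.pow_const q)
  -- Weighting Hölder's inequality by the slice norms `c` makes every slice integrate to `c y`.
  calc ∫⁻ x, (∫⁻ y, f x y ∂ν) ^ q ∂μ
      ≤ ∫⁻ x, (∫⁻ y, c y ∂ν) ^ (q - 1) * ∫⁻ y, c y ^ (1 - q) * f x y ^ q ∂ν ∂μ :=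
        lintegral_mono_ae (hfc.mono fun x hx => rpow_lintegral_le_weight_mul_lintegral hq
          hf.of_uncurry_left.aemeasurable hc.aemeasurable hc_top hx)
    _ = (∫⁻ y, c y ∂ν) ^ (q - 1) * ∫⁻ y, ∫⁻ x, c y ^ (1 - q) * f x y ^ q ∂μ ∂ν := by
        rw [lintegral_const_mul' _ _ (ENNReal.rpow_ne_top_of_nonneg (by linarith) hC),
          lintegral_lintegral_swap]
        exact (((hc.comp measurable_snd).pow_const _).mul (hf.pow_const q)).aemeasurable
    _ = (∫⁻ y, c y ∂ν) ^ (q - 1) * ∫⁻ y, c y ^ (1 - q) * c y ^ q ∂ν := by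
        simp only [← hc_rpow, lintegral_const_mul _ (hf.of_uncurry_right.pow_const q)]
    _ ≤ (∫⁻ y, c y ∂ν) ^ (q - 1) * ∫⁻ y, c y ∂ν := by
        gcongr with y
        rcases eq_or_ne (c y) 0 with hcy | hcy
        · simp [hcy, hq0]
        rcases eq_or_ne (c y) ∞ with hcy' | hcy'
        · simp [hcy']
        rw [← ENNReal.rpow_add _ _ hcy hcy', sub_add_cancel, ENNReal.rpow_one]
    _ = (∫⁻ y, c y ∂ν) ^ q := by
        conv_rhs => rw [← sub_add_cancel q 1,
          ENNReal.rpow_add_of_nonneg _ _ (by linarith) zero_le_one, ENNReal.rpow_one]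

theorem lintegral_rpow_lintegral_le {f : α → β → ℝ≥0∞} (hq : 1 ≤ q)
    (hf : AEMeasurable (uncurry f) (μ.prod ν)) :
    ∫⁻ x, (∫⁻ y, f x y ∂ν) ^ q ∂μ ≤ (∫⁻ y, (∫⁻ x, f x y ^ q ∂μ) ^ (1 / q) ∂ν) ^ q := by
  obtain ⟨g, hg, hfg⟩ := hf
  have hxy : ∀ᵐ x ∂μ, ∀ᵐ y ∂ν, f x y = g (x, y) := Measure.ae_ae_of_ae_prod hfg
  have hyx : ∀ᵐ y ∂ν, ∀ᵐ x ∂μ, f x y = g (x, y) :=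
    Measure.ae_ae_of_ae_prod (Measure.measurePreserving_swap.quasiMeasurePreserving.ae hfg)
  calc ∫⁻ x, (∫⁻ y, f x y ∂ν) ^ q ∂μ
      = ∫⁻ x, (∫⁻ y, g (x, y) ∂ν) ^ q ∂μ :=
        lintegral_congr_ae (hxy.mono fun x hx => by simp only [lintegral_congr_ae hx])
    _ ≤ (∫⁻ y, (∫⁻ x, g (x, y) ^ q ∂μ) ^ (1 / q) ∂ν) ^ q :=
        lintegral_rpow_lintegral_le_of_measurable (f := curry g) hq hg
    _ = (∫⁻ y, (∫⁻ x, f x y ^ q ∂μ) ^ (1 / q) ∂ν) ^ q := by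
        congr 1
        refine lintegral_congr_ae (hyx.mono fun y hy => ?_)
        simp only [lintegral_congr_ae (hy.mono fun _ hx => congrArg (· ^ q) hx)]

end Minkowski

theorem lintegral_Ioi_rpow_of_lt {r : ℝ} (hr : r < -1) {c : ℝ} (hc : 0 < c) :
    ∫⁻ t in Ioi c, ENNReal.ofReal (t ^ r) = ENNReal.ofReal (-c ^ (r + 1) / (r + 1)) := by
  rw [← ofReal_integral_eq_lintegral_ofReal (integrableOn_Ioi_rpow_of_lt hr hc),
    integral_Ioi_rpow_of_lt hr hc]
  exact ae_restrict_of_forall_mem measurableSet_Ioi fun t ht => Real.rpow_nonneg (hc.trans ht).le r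

section RayIntegral

variable {E : Type*} [NormedAddCommGroup E] [NormedSpace ℝ E]

/-- The Hardy-type averaging operator `f ↦ ∫₁^∞ f (t x) dt`, integrating `f` over the ray from `x`
to infinity. It dominates `|u x| / |x|` when `f` is the size of the derivative of `u`. The values
are extended nonnegative reals, so no convergence has to be assumed. -/
noncomputable def rayIntegral (f : E → ℝ≥0∞) (x : E) : ℝ≥0∞ := ∫⁻ t in Ioi (1 : ℝ), f (t • x)

theorem enorm_le_enorm_mul_rayIntegral_enorm_fderiv {F : Type*} [NormedAddCommGroup F]
    [NormedSpace ℝ F] [CompleteSpace F] {u : E → F} (hu : ContDiff ℝ 1 u)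
    (hu_supp : HasCompactSupport u) {x : E} (hx : x ≠ 0) :
    ‖u x‖ₑ ≤ ‖x‖ₑ * rayIntegral (fun y => ‖fderiv ℝ u y‖ₑ) x := by
  have hderiv (t : ℝ) : deriv (fun s : ℝ => u (s • x)) t = fderiv ℝ u (t • x) x := by
    have hray : HasDerivAt (fun s : ℝ => s • x) x t := by
      simpa using (hasDerivAt_id t).smul_const x
    exact ((hu.differentiable one_ne_zero _).hasFDerivAt.comp_hasDerivAt t hray).deriv
  have hftc : ∫ t in Ioi (1 : ℝ), fderiv ℝ u (t • x) x = -u x := by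
    have hray_supp : HasCompactSupport fun s : ℝ => u (s • x) :=
      hu_supp.comp_isClosedEmbedding (isClosedEmbedding_smul_left hx)
    simpa [hderiv] using hray_supp.integral_Ioi_deriv_eq (by fun_prop) 1
  calc ‖u x‖ₑ = ‖∫ t in Ioi (1 : ℝ), fderiv ℝ u (t • x) x‖ₑ := by rw [hftc, enorm_neg]
    _ ≤ ∫⁻ t in Ioi (1 : ℝ), ‖fderiv ℝ u (t • x) x‖ₑ := enorm_integral_le_lintegral_enorm _
    _ ≤ ∫⁻ t in Ioi (1 : ℝ), ‖x‖ₑ * ‖fderiv ℝ u (t • x)‖ₑ := by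
        gcongr with t
        exact (ContinuousLinearMap.le_opENorm _ _).trans_eq (mul_comm _ _)
    _ = ‖x‖ₑ * rayIntegral (fun y => ‖fderiv ℝ u y‖ₑ) x := lintegral_const_mul' _ _ enorm_ne_top

variable [FiniteDimensional ℝ E] [MeasurableSpace E] [BorelSpace E] {μ : Measure E}
  [μ.IsAddHaarMeasure]

theorem lintegral_comp_smul (f : E → ℝ≥0∞) {r : ℝ} (hr : r ≠ 0) :
    ∫⁻ x, f (r • x) ∂μ = ENNReal.ofReal |(r ^ finrank ℝ E)⁻¹| * ∫⁻ x, f x ∂μ := by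
  rw [← (measurableEmbedding_const_smul₀ hr).lintegral_map, Measure.map_addHaar_smul μ hr,
    lintegral_smul_measure, smul_eq_mul]

theorem quasiMeasurePreserving_swap_smul :
    Measure.QuasiMeasurePreserving (fun p : E × ℝ => p.2 • p.1) (μ.prod volume) μ := by
  refine QuasiMeasurePreserving.prod_of_left (by fun_prop) ?_
  filter_upwards [Measure.ae_ne volume (0 : ℝ)] with r hr using
    Measure.quasiMeasurePreserving_smul μ hr

theorem lintegral_rayIntegral_rpow_le {q : ℝ} (hq : 1 ≤ q) (hqE : q < finrank ℝ E)
    {f : E → ℝ≥0∞} (hf : AEMeasurable f μ) :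
    ∫⁻ x, rayIntegral f x ^ q ∂μ ≤
      ENNReal.ofReal (q / (finrank ℝ E - q)) ^ q * ∫⁻ x, f x ^ q ∂μ := by
  have hq0 : 0 < q := by linarith
  set d : ℝ := (finrank ℝ E : ℝ)
  have hscale {t : ℝ} (ht : t ∈ Ioi (1 : ℝ)) : (∫⁻ x, f (t • x) ^ q ∂μ) ^ (1 / q) =
      ENNReal.ofReal (t ^ (-d / q)) * (∫⁻ x, f x ^ q ∂μ) ^ (1 / q) := by
    have ht0 : 0 < t := one_pos.trans ht
    have habs : |(t ^ finrank ℝ E)⁻¹| = t ^ (-d) := by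
      rw [abs_of_pos (by positivity), Real.rpow_neg ht0.le, Real.rpow_natCast]
    rw [lintegral_comp_smul (fun x => f x ^ q) ht0.ne', habs,
      ENNReal.mul_rpow_of_nonneg _ _ (by positivity), ENNReal.ofReal_rpow_of_pos (by positivity),
      ← Real.rpow_mul ht0.le, mul_one_div]
  have hK : ∫⁻ t in Ioi (1 : ℝ), ENNReal.ofReal (t ^ (-d / q)) = ENNReal.ofReal (q / (d - q)) := by
    have hexp : -d / q < -1 := by rw [div_lt_iff₀ hq0]; linarith
    rw [lintegral_Ioi_rpow_of_lt hexp one_pos, Real.one_rpow]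
    have hexp' : -d / q + 1 = -((d - q) / q) := by field_simp; ring
    rw [hexp', neg_div_neg_eq, one_div_div]
  calc ∫⁻ x, rayIntegral f x ^ q ∂μ
      ≤ (∫⁻ t in Ioi (1 : ℝ), (∫⁻ x, f (t • x) ^ q ∂μ) ^ (1 / q)) ^ q :=
        lintegral_rpow_lintegral_le hq (hf.comp_quasiMeasurePreserving
          (quasiMeasurePreserving_swap_smul.mono_left
            (Measure.AbsolutelyContinuous.rfl.prod Measure.restrict_le_self.absolutelyContinuous)))
    _ = (∫⁻ t in Ioi (1 : ℝ),
          ENNReal.ofReal (t ^ (-d / q)) * (∫⁻ x, f x ^ q ∂μ) ^ (1 / q)) ^ q := by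
        rw [setLIntegral_congr_fun measurableSet_Ioi fun t ht => hscale ht]
    _ = ENNReal.ofReal (q / (d - q)) ^ q * ∫⁻ x, f x ^ q ∂μ := by
        rw [lintegral_mul_const _ (by fun_prop), hK, ENNReal.mul_rpow_of_nonneg _ _ hq0.le,
          ← ENNReal.rpow_mul, one_div_mul_cancel hq0.ne', ENNReal.rpow_one]

end RayIntegral

section RadiallyMonotoneOn

variable {E R S : Type*} [SMul ℝ E] [Preorder R] [Preorder S] {w : E → R} {s t : Set E}

/-- Monotonicity of a weight along the segments towards the origin, `w (l x) ≤ w x` for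
`0 < l ≤ 1`. The set `s` need not be star-shaped: the inequality is only asked for when `l x` is
again in `s`. -/
def RadiallyMonotoneOn (w : E → R) (s : Set E) : Prop :=
  ∀ x ∈ s, ∀ l ∈ Ioc (0 : ℝ) 1, l • x ∈ s → w (l • x) ≤ w x

theorem RadiallyMonotoneOn.mono (hw : RadiallyMonotoneOn w t) (hst : s ⊆ t) :
    RadiallyMonotoneOn w s :=
  fun x hx l hl hlx => hw x (hst hx) l hl (hst hlx)

theorem RadiallyMonotoneOn.monotone_comp {g : R → S} (hw : RadiallyMonotoneOn w s)
    (hg : Monotone g) : RadiallyMonotoneOn (g ∘ w) s :=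
  fun x hx l hl hlx => hg (hw x hx l hl hlx)

end RadiallyMonotoneOn

theorem RadiallyMonotoneOn.le_smul {E R : Type*} [AddCommGroup E] [Module ℝ E] [Preorder R]
    {w : E → R} {s : Set E} (hw : RadiallyMonotoneOn w s) {x : E} (hx : x ∈ s) {t : ℝ}
    (ht : 1 ≤ t) (htx : t • x ∈ s) : w x ≤ w (t • x) := by
  have ht0 : 0 < t := one_pos.trans_le ht
  have hinv : t⁻¹ • t • x = x := inv_smul_smul₀ ht0.ne' x
  simpa only [hinv] using
    hw (t • x) htx t⁻¹ ⟨inv_pos.2 ht0, inv_le_one_of_one_le₀ ht⟩ (hinv.symm ▸ hx)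

section WeightedHardy

variable {E F : Type*} [NormedAddCommGroup E] [NormedSpace ℝ E] [NormedAddCommGroup F]
  [NormedSpace ℝ F] {u : E → F}

theorem enorm_fderiv_of_notMem_tsupport {x : E} (hx : x ∉ tsupport u) : ‖fderiv ℝ u x‖ₑ = 0 := by
  rw [← ofReal_norm, fderiv_of_notMem_tsupport ℝ hx, norm_zero, ENNReal.ofReal_zero]

variable [CompleteSpace F]

theorem weight_mul_enorm_le_enorm_mul_rayIntegral (hu : ContDiff ℝ 1 u)
    (hu_supp : HasCompactSupport u) {w : E → ℝ≥0∞} (hw : RadiallyMonotoneOn w (tsupport u))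
    {x : E} (hx : x ≠ 0) :
    w x * ‖u x‖ₑ ≤ ‖x‖ₑ * rayIntegral (fun y => w y * ‖fderiv ℝ u y‖ₑ) x := by
  by_cases! hxu : x ∉ tsupport u
  · simp [image_eq_zero_of_notMem_tsupport hxu]
  have hray : Continuous fun t : ℝ => fderiv ℝ u (t • x) :=
    (hu.continuous_fderiv one_ne_zero).comp (by fun_prop)
  calc w x * ‖u x‖ₑ ≤ w x * (‖x‖ₑ * rayIntegral (fun y => ‖fderiv ℝ u y‖ₑ) x) := by
        gcongr
        exact enorm_le_enorm_mul_rayIntegral_enorm_fderiv hu hu_supp hx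
    _ = ‖x‖ₑ * ∫⁻ t in Ioi (1 : ℝ), w x * ‖fderiv ℝ u (t • x)‖ₑ := by
        rw [rayIntegral, lintegral_const_mul _ hray.enorm.measurable, mul_left_comm]
    _ ≤ ‖x‖ₑ * rayIntegral (fun y => w y * ‖fderiv ℝ u y‖ₑ) x := by
        refine mul_le_mul_right (setLIntegral_mono' measurableSet_Ioi fun t ht => ?_) _
        by_cases htx : t • x ∈ tsupport u
        · exact mul_le_mul_left (hw.le_smul hxu (le_of_lt ht) htx) _
        · simp [enorm_fderiv_of_notMem_tsupport htx]

variable [FiniteDimensional ℝ E] [MeasurableSpace E] [BorelSpace E] {μ : Measure E}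
  [μ.IsAddHaarMeasure] {q : ℝ}

theorem lintegral_weighted_hardy (hq : 1 ≤ q) (hqE : q < finrank ℝ E) {w : E → ℝ≥0∞}
    (hw : AEMeasurable w (μ.restrict (tsupport u))) (hw_mono : RadiallyMonotoneOn w (tsupport u))
    (hu : ContDiff ℝ 1 u) (hu_supp : HasCompactSupport u) :
    ∫⁻ x, w x * ‖u x‖ₑ ^ q / ‖x‖ₑ ^ q ∂μ ≤
      ENNReal.ofReal (q / (finrank ℝ E - q)) ^ q * ∫⁻ x, w x * ‖fderiv ℝ u x‖ₑ ^ q ∂μ := by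
  have hq0 : 0 < q := by linarith
  have : Nontrivial E := nontrivial_of_finrank_pos (R := ℝ) (by exact_mod_cast hq0.trans hqE)
  set v : E → ℝ≥0∞ := fun x => w x ^ (1 / q) with hv_def
  have hv_rpow (x : E) : v x ^ q = w x := by
    rw [hv_def, ← ENNReal.rpow_mul, one_div_mul_cancel hq0.ne', ENNReal.rpow_one]
  have hv_mono : RadiallyMonotoneOn v (tsupport u) :=
    hw_mono.monotone_comp (ENNReal.monotone_rpow_of_nonneg (by positivity))
  have hv_meas : AEMeasurable (fun x => v x * ‖fderiv ℝ u x‖ₑ) μ := by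
    have hv_supp : support (fun x => v x * ‖fderiv ℝ u x‖ₑ) ⊆ tsupport u := fun x hx => by
      contrapose! hx
      simp [enorm_fderiv_of_notMem_tsupport hx]
    rw [← indicator_eq_self.2 hv_supp,
      aemeasurable_indicator_iff (isClosed_tsupport u).measurableSet]
    exact (hw.pow_const _).mul (hu.continuous_fderiv one_ne_zero).enorm.measurable.aemeasurable
  calc ∫⁻ x, w x * ‖u x‖ₑ ^ q / ‖x‖ₑ ^ q ∂μ
      ≤ ∫⁻ x, rayIntegral (fun y => v y * ‖fderiv ℝ u y‖ₑ) x ^ q ∂μ := by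
        refine lintegral_mono_ae ((Measure.ae_ne μ 0).mono fun x hx => ?_)
        rw [← hv_rpow, ← ENNReal.mul_rpow_of_nonneg _ _ hq0.le,
          ← ENNReal.div_rpow_of_nonneg _ _ hq0.le]
        gcongr
        exact ENNReal.div_le_of_le_mul'
          (weight_mul_enorm_le_enorm_mul_rayIntegral hu hu_supp hv_mono hx)
    _ ≤ ENNReal.ofReal (q / (finrank ℝ E - q)) ^ q *
          ∫⁻ x, (v x * ‖fderiv ℝ u x‖ₑ) ^ q ∂μ := lintegral_rayIntegral_rpow_le hq hqE hv_meas
    _ = ENNReal.ofReal (q / (finrank ℝ E - q)) ^ q * ∫⁻ x, w x * ‖fderiv ℝ u x‖ₑ ^ q ∂μ := by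
        simp only [ENNReal.mul_rpow_of_nonneg _ _ hq0.le, hv_rpow]

theorem integrable_and_integral_le_of_lintegral_ofReal_le {α : Type*} [MeasurableSpace α]
    {μ : Measure α} {f g : α → ℝ} {C : ℝ} (hf : AEStronglyMeasurable f μ) (hf_nonneg : 0 ≤ᵐ[μ] f)
    (hg : Integrable g μ) (hg_nonneg : 0 ≤ᵐ[μ] g) (hC : 0 ≤ C)
    (hfg : ∫⁻ x, ENNReal.ofReal (f x) ∂μ ≤ ENNReal.ofReal C * ∫⁻ x, ENNReal.ofReal (g x) ∂μ) :
    Integrable f μ ∧ ∫ x, f x ∂μ ≤ C * ∫ x, g x ∂μ := by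
  rw [← ofReal_integral_eq_lintegral_ofReal hg hg_nonneg, ← ENNReal.ofReal_mul hC] at hfg
  have hf_int : Integrable f μ :=
    (lintegral_ofReal_ne_top_iff_integrable hf hf_nonneg).1 (ne_top_of_le_ne_top (by simp) hfg)
  rw [← ofReal_integral_eq_lintegral_ofReal hf_int hf_nonneg] at hfg
  exact ⟨hf_int,
    (ENNReal.ofReal_le_ofReal_iff (mul_nonneg hC (integral_nonneg_of_ae hg_nonneg))).1 hfg⟩

theorem mul_nonneg_of_support_subset {α R : Type*} [MulZeroClass R] [Preorder R] [PosMulMono R]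
    {f g : α → R} {s : Set α} (hf : ∀ x ∈ s, 0 ≤ f x) (hg : 0 ≤ g) (hgs : support g ⊆ s) (x : α) :
    0 ≤ f x * g x := by
  by_cases hx : x ∈ s
  · exact mul_nonneg (hf x hx) (hg x)
  · simp [notMem_support.1 (notMem_subset hgs hx)]

theorem integral_weighted_hardy (hq : 1 ≤ q) (hqE : q < finrank ℝ E) {a : E → ℝ}
    (ha : IntegrableOn a (tsupport u) μ) (ha_nonneg : ∀ x ∈ tsupport u, 0 ≤ a x)
    (ha_mono : RadiallyMonotoneOn a (tsupport u)) (hu : ContDiff ℝ 1 u)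
    (hu_supp : HasCompactSupport u) :
    Integrable (fun x => a x * ‖u x‖ ^ q / ‖x‖ ^ q) μ ∧
      ∫ x, a x * ‖u x‖ ^ q / ‖x‖ ^ q ∂μ ≤
        (q / (finrank ℝ E - q)) ^ q * ∫ x, a x * ‖fderiv ℝ u x‖ ^ q ∂μ := by
  have hq0 : 0 < q := by linarith
  have hK : 0 < q / (finrank ℝ E - q) := div_pos hq0 (by linarith)
  have hu' : Continuous (fderiv ℝ u) := hu.continuous_fderiv one_ne_zero
  have hf_supp : support (fun x => ‖u x‖ ^ q / ‖x‖ ^ q) ⊆ tsupport u := fun x hx => by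
    contrapose! hx
    simp [image_eq_zero_of_notMem_tsupport hx, hq0.ne']
  have hg_supp : support (fun x => ‖fderiv ℝ u x‖ ^ q) ⊆ tsupport u := fun x hx => by
    contrapose! hx
    simp [fderiv_of_notMem_tsupport ℝ hx, hq0.ne']
  have hg_int : Integrable (fun x => a x * ‖fderiv ℝ u x‖ ^ q) μ := by
    rw [← integrableOn_iff_integrable_of_support_subset
      ((support_mul_subset_right _ _).trans hg_supp)]
    exact ha.mul_continuousOn (hu'.norm.rpow_const fun _ => .inr hq0.le).continuousOn hu_supp
  have hf_meas : AEStronglyMeasurable (fun x => a x * ‖u x‖ ^ q / ‖x‖ ^ q) μ := by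
    simp only [mul_div_assoc]
    rw [← indicator_eq_self.2 ((support_mul_subset_right a _).trans hf_supp),
      aestronglyMeasurable_indicator_iff (isClosed_tsupport u).measurableSet]
    exact ha.1.mul ((hu.continuous.norm.measurable.pow_const q).div
      (measurable_norm.pow_const q)).aestronglyMeasurable
  have hfg : ∫⁻ x, ENNReal.ofReal (a x * ‖u x‖ ^ q / ‖x‖ ^ q) ∂μ ≤
      ENNReal.ofReal ((q / (finrank ℝ E - q)) ^ q) *
        ∫⁻ x, ENNReal.ofReal (a x * ‖fderiv ℝ u x‖ ^ q) ∂μ := by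
    have hardy := lintegral_weighted_hardy hq hqE ha.1.aemeasurable.ennreal_ofReal
      (ha_mono.monotone_comp ENNReal.ofReal_mono) hu hu_supp
    simp only [← ofReal_norm, ENNReal.ofReal_rpow_of_nonneg (norm_nonneg _) hq0.le,
      ENNReal.ofReal_rpow_of_pos hK,
      ← ENNReal.ofReal_mul' (Real.rpow_nonneg (norm_nonneg _) q)] at hardy
    -- Only `≤` at `x = 0`, where the real quotient is `0` but the extended one may be `∞`.
    exact (lintegral_mono fun x => ENNReal.ofReal_div_le (by positivity)).trans hardy
  have hf_nonneg : ∀ x, 0 ≤ a x * ‖u x‖ ^ q / ‖x‖ ^ q := fun x => by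
    rw [mul_div_assoc]
    exact mul_nonneg_of_support_subset ha_nonneg (fun x => by positivity) hf_supp x
  have hg_nonneg : ∀ x, 0 ≤ a x * ‖fderiv ℝ u x‖ ^ q :=
    mul_nonneg_of_support_subset ha_nonneg (fun x => by positivity) hg_supp
  exact integrable_and_integral_le_of_lintegral_ofReal_le hf_meas (.of_forall hf_nonneg) hg_int
    (.of_forall hg_nonneg) (by positivity) hfg

theorem weighted_hardy_inequality_general {Ω : Set E} (hq : 1 ≤ q) (hqE : q < finrank ℝ E)
    {a : E → ℝ} (ha : LocallyIntegrableOn a Ω μ) (ha_nonneg : ∀ x ∈ Ω, 0 ≤ a x)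
    (ha_mono : RadiallyMonotoneOn a Ω) (hu : ContDiff ℝ 1 u) (hu_supp : HasCompactSupport u)
    (huΩ : tsupport u ⊆ Ω) :
    IntegrableOn (fun x => a x * ‖u x‖ ^ q / ‖x‖ ^ q) Ω μ ∧
      ∫ x in Ω, a x * ‖u x‖ ^ q / ‖x‖ ^ q ∂μ ≤
        (q / (finrank ℝ E - q)) ^ q * ∫ x in Ω, a x * ‖fderiv ℝ u x‖ ^ q ∂μ := by
  have hq0 : q ≠ 0 := by linarith
  obtain ⟨hint, hle⟩ := integral_weighted_hardy hq hqE
    (ha.integrableOn_compact_subset huΩ hu_supp) (fun x hx => ha_nonneg x (huΩ hx))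
    (ha_mono.mono huΩ) hu hu_supp
  refine ⟨hint.integrableOn, ?_⟩
  rwa [setIntegral_eq_integral_of_forall_compl_eq_zero fun x hx => ?_,
    setIntegral_eq_integral_of_forall_compl_eq_zero fun x hx => ?_]
  · simp [fderiv_of_notMem_tsupport ℝ (notMem_subset huΩ hx), hq0]
  · simp [image_eq_zero_of_notMem_tsupport (notMem_subset huΩ hx), hq0]

end WeightedHardy

theorem weighted_hardy_inequality (N : ℕ) (hN : 2 ≤ N)
    (Ω : Set (EuclideanSpace ℝ (Fin N))) (hΩopen : IsOpen Ω)
    (hΩbdd : Bornology.IsBounded Ω) (h0 : (0 : EuclideanSpace ℝ (Fin N)) ∈ Ω)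
    (q : ℝ) (hq1 : 1 < q) (hqN : q < N)
    (a : EuclideanSpace ℝ (Fin N) → ℝ) (haco : ContinuousOn a (closure Ω))
    (hapos : ∀ x ∈ closure Ω, 0 ≤ a x)
    (hamono : ∀ l : ℝ, l ∈ Set.Ioc (0 : ℝ) 1 → ∀ x ∈ closure Ω, a (l • x) ≤ a x)
    (u : EuclideanSpace ℝ (Fin N) → ℝ) (husm : ContDiff ℝ (⊤ : ℕ∞) u)
    (husupp : HasCompactSupport u) (hsupp : tsupport u ⊆ Ω) :
    ∫ x in Ω, a x * |u x| ^ q / ‖x‖ ^ q ≤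
      (q / (N - q)) ^ q * ∫ x in Ω, a x * ‖fderiv ℝ u x‖ ^ q := by
  simpa only [finrank_euclideanSpace_fin, Real.norm_eq_abs] using
    (weighted_hardy_inequality_general (μ := volume) hq1.le (by simpa using hqN)
      ((haco.mono subset_closure).locallyIntegrableOn hΩopen.measurableSet)
      (fun x hx => hapos x (subset_closure hx))
      (fun x hx l hl _ => hamono l hl x (subset_closure hx))
      (husm.of_le (by simp)) husupp hsupp).2
end

section
/- Let N ≥ 2 and 1 < p < N. For every u ∈ C_0^∞(ℝ^N): ∫_{ℝ^N} |u(x)|^p / |x|^p dx ≤ (p/(N-p))^p ∫_{ℝ^N} |∇u(x)|^p dx. -/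
open MeasureTheory

/-!
By the fundamental theorem of calculus along the ray through `x`,
`‖u x‖ / ‖x‖ ≤ ∫_{t > 1} ‖∇u (t x)‖ dt`. Minkowski's integral inequality bounds the `L^p` norm of
the right-hand side by `∫_{t > 1} ‖∇u (t ·)‖_p dt`, and `‖∇u (t ·)‖_p = t ^ (-n / p) ‖∇u‖_p` by
scaling, so the constant is `∫_{t > 1} t ^ (-n / p) dt = p / (n - p)`.
-/

open Module Set
open scoped ENNReal NNReal

theorem rpow_lintegral_le_lintegral_weight_mul {α : Type*} {m : MeasurableSpace α} {μ : Measure α}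
    {p : ℝ} (hp : 1 ≤ p) {f w : α → ℝ≥0∞} (hf : AEMeasurable f μ) (hw : AEMeasurable w μ)
    (hw_top : ∀ᵐ a ∂μ, w a ≠ ∞) (hw_zero : ∀ᵐ a ∂μ, w a = 0 → f a = 0) :
    (∫⁻ a, f a ∂μ) ^ p ≤ (∫⁻ a, w a ∂μ) ^ (p - 1) * ∫⁻ a, w a ^ (1 - p) * f a ^ p ∂μ := by
  have hp₀ : 0 < p := one_pos.trans_le hp
  have exponents_cancel : (p - 1) / p + (1 - p) * (1 / p) = 0 := by ring
  have factor : ∀ᵐ a ∂μ, f a = w a ^ ((p - 1) / p) * (w a ^ (1 - p) * f a ^ p) ^ (1 / p) := by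
    filter_upwards [hw_top, hw_zero] with a ha_top ha_zero
    by_cases ha : w a = 0
    · simp [ha_zero ha, hp₀]
    rw [ENNReal.mul_rpow_of_nonneg _ _ (by positivity), ← ENNReal.rpow_mul, ← ENNReal.rpow_mul,
      ← mul_assoc, ← ENNReal.rpow_add _ _ ha ha_top, exponents_cancel, mul_one_div_cancel hp₀.ne',
      ENNReal.rpow_zero, ENNReal.rpow_one, one_mul]
  calc
    (∫⁻ a, f a ∂μ) ^ p
      = (∫⁻ a, w a ^ ((p - 1) / p) * (w a ^ (1 - p) * f a ^ p) ^ (1 / p) ∂μ) ^ p := by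
        rw [lintegral_congr_ae factor]
    _ ≤ ((∫⁻ a, w a ∂μ) ^ ((p - 1) / p) *
          (∫⁻ a, w a ^ (1 - p) * f a ^ p ∂μ) ^ (1 / p)) ^ p := by
        gcongr
        exact ENNReal.lintegral_mul_norm_pow_le hw (by fun_prop)
          (div_nonneg (by linarith) hp₀.le) (by positivity) (by field_simp; ring)
    _ = (∫⁻ a, w a ∂μ) ^ (p - 1) * ∫⁻ a, w a ^ (1 - p) * f a ^ p ∂μ := by
        rw [ENNReal.mul_rpow_of_nonneg _ _ hp₀.le, ← ENNReal.rpow_mul, ← ENNReal.rpow_mul,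
          div_mul_cancel₀ _ hp₀.ne', div_mul_cancel₀ _ hp₀.ne', ENNReal.rpow_one]

theorem eLpNorm_rpow_one_sub_mul_lintegral_rpow_le {α ε : Type*} {m : MeasurableSpace α}
    {μ : Measure α} [ENorm ε] {p : ℝ≥0} (hp : p ≠ 0) (g : α → ε) :
    eLpNorm g p μ ^ (1 - p : ℝ) * ∫⁻ a, ‖g a‖ₑ ^ (p : ℝ) ∂μ ≤ eLpNorm g p μ := by
  rw [← eLpNorm_nnreal_pow_eq_lintegral hp]
  rcases eq_or_ne (eLpNorm g p μ) ∞ with h_top | h_top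
  · exact h_top ▸ le_top
  rcases eq_or_ne (eLpNorm g p μ) 0 with h_zero | h_zero
  · simp [h_zero, pos_iff_ne_zero.2 hp]
  · rw [← ENNReal.rpow_add _ _ h_zero h_top, sub_add_cancel, ENNReal.rpow_one]

section Minkowski

variable {α β : Type*} {mα : MeasurableSpace α} {mβ : MeasurableSpace β}
  {μ : Measure α} {ν : Measure β} [SFinite μ] {p : ℝ≥0} {f : α → β → ℝ≥0∞}

theorem measurable_eLpNorm_left (hf : Measurable (Function.uncurry f)) :
    Measurable fun b ↦ eLpNorm (fun a ↦ f a b) p μ := by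
  rcases eq_or_ne p 0 with rfl | hp
  · simp
  simp only [eLpNorm_nnreal_eq_lintegral hp, enorm_eq_self]
  exact (hf.pow_const (p : ℝ)).lintegral_prod_left'.pow_const _

variable [SFinite ν]

theorem ae_ae_eq_zero_of_eLpNorm_eq_zero (hp : p ≠ 0) (hf : Measurable (Function.uncurry f)) :
    ∀ᵐ a ∂μ, ∀ᵐ b ∂ν, eLpNorm (fun a ↦ f a b) p μ = 0 → f a b = 0 := by
  have hnorm := measurable_eLpNorm_left (μ := μ) (p := p) hf
  rw [Measure.ae_ae_comm (p := fun a b ↦ eLpNorm (fun a ↦ f a b) p μ = 0 → f a b = 0)]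
  · refine .of_forall fun b ↦ ?_
    rw [Filter.eventually_imp_distrib_left]
    intro hb
    exact (eLpNorm_eq_zero_iff hf.of_uncurry_right.aestronglyMeasurable
      (by exact_mod_cast hp)).1 hb
  · exact ((hnorm.comp measurable_snd) (measurableSet_singleton 0)).imp
      (hf (measurableSet_singleton 0))

-- Weighted Hölder in `b` with `w b = ‖f · b‖_p`: integrating `w b ^ (1 - p) * f a b ^ p` over `a`
-- then gives back `w b`.
theorem eLpNorm_lintegral_le (hp : 1 ≤ p) (hf : Measurable (Function.uncurry f)) :
    eLpNorm (fun a ↦ ∫⁻ b, f a b ∂ν) p μ ≤ ∫⁻ b, eLpNorm (fun a ↦ f a b) p μ ∂ν := by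
  have hp' : 1 ≤ (p : ℝ) := by exact_mod_cast hp
  have hp₀ : p ≠ 0 := (one_pos.trans_le hp).ne'
  set w : β → ℝ≥0∞ := fun b ↦ eLpNorm (fun a ↦ f a b) p μ
  have hw : Measurable w := measurable_eLpNorm_left hf
  rcases eq_or_ne (∫⁻ b, w b ∂ν) ∞ with hW | hW
  · simp [hW]
  have hw_top : ∀ᵐ b ∂ν, w b ≠ ∞ := (ae_lt_top hw hW).mono fun _ h ↦ h.ne
  have hw_zero : ∀ᵐ a ∂μ, ∀ᵐ b ∂ν, w b = 0 → f a b = 0 := ae_ae_eq_zero_of_eLpNorm_eq_zero hp₀ hf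
  have hmeas : Measurable (Function.uncurry fun a b ↦ w b ^ (1 - p : ℝ) * f a b ^ (p : ℝ)) :=
    ((hw.comp measurable_snd).pow_const _).mul (hf.pow_const _)
  rw [← ENNReal.rpow_le_rpow_iff (zero_lt_one.trans_le hp'), eLpNorm_nnreal_pow_eq_lintegral hp₀]
  calc
    ∫⁻ a, ‖∫⁻ b, f a b ∂ν‖ₑ ^ (p : ℝ) ∂μ
      ≤ ∫⁻ a, (∫⁻ b, w b ∂ν) ^ (p - 1 : ℝ) *
          ∫⁻ b, w b ^ (1 - p : ℝ) * f a b ^ (p : ℝ) ∂ν ∂μ := by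
        refine lintegral_mono_ae (hw_zero.mono fun a ha ↦ ?_)
        exact rpow_lintegral_le_lintegral_weight_mul hp' hf.of_uncurry_left.aemeasurable
          hw.aemeasurable hw_top ha
    _ = (∫⁻ b, w b ∂ν) ^ (p - 1 : ℝ) *
          ∫⁻ b, w b ^ (1 - p : ℝ) * ∫⁻ a, f a b ^ (p : ℝ) ∂μ ∂ν := by
        rw [lintegral_const_mul' _ _ (ENNReal.rpow_ne_top_of_nonneg (by linarith) hW),
          lintegral_lintegral_swap hmeas.aemeasurable]
        congr! 3 with b
        exact lintegral_const_mul _ (hf.of_uncurry_right.pow_const _)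
    _ ≤ (∫⁻ b, w b ∂ν) ^ (p - 1 : ℝ) * ∫⁻ b, w b ∂ν := by
        refine mul_le_mul_right (lintegral_mono fun b ↦ ?_) _
        exact eLpNorm_rpow_one_sub_mul_lintegral_rpow_le hp₀ (f · b)
    _ = (∫⁻ b, w b ∂ν) ^ (p : ℝ) := by
        nth_rw 2 [← ENNReal.rpow_one (∫⁻ b, w b ∂ν)]
        rw [← ENNReal.rpow_add_of_nonneg _ _ (by linarith) zero_le_one, sub_add_cancel]

end Minkowski

theorem lintegral_Ioi_ofReal_rpow_of_lt {a c : ℝ} (ha : a < -1) (hc : 0 < c) :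
    ∫⁻ t in Ioi c, ENNReal.ofReal (t ^ a) = ENNReal.ofReal (-c ^ (a + 1) / (a + 1)) := by
  rw [← integral_Ioi_rpow_of_lt ha hc,
    ofReal_integral_eq_lintegral_ofReal (integrableOn_Ioi_rpow_of_lt ha hc)]
  filter_upwards [ae_restrict_mem measurableSet_Ioi] with t ht
  exact Real.rpow_nonneg (hc.trans ht).le a

section Calculus

variable {E F : Type*} [NormedAddCommGroup E] [NormedSpace ℝ E]
  [NormedAddCommGroup F] [NormedSpace ℝ F]

theorem enorm_le_lintegral_Ioi_deriv {f : ℝ → F} (hf : ContDiff ℝ 1 f)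
    (h'f : HasCompactSupport f) (x : ℝ) : ‖f x‖ₑ ≤ ∫⁻ y in Ioi x, ‖deriv f y‖ₑ := by
  have h := HasCompactSupport.enorm_le_lintegral_Ici_deriv (hf.comp contDiff_neg)
    (h'f.comp_homeomorph (Homeomorph.neg ℝ)) (-x)
  have hneg := (Measure.measurePreserving_neg (volume : Measure ℝ)).setLIntegral_comp_preimage_emb
    (MeasurableEquiv.neg ℝ).measurableEmbedding (fun y ↦ ‖deriv f y‖ₑ) (Ici x)
  rw [setLIntegral_congr Ioi_ae_eq_Ici, ← hneg]
  simpa [Function.comp_def, deriv_comp_neg] using h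

theorem enorm_inv_norm_smul_le_lintegral_fderiv {u : E → F} (hu : ContDiff ℝ 1 u)
    (h2u : HasCompactSupport u) (x : E) :
    ‖‖x‖⁻¹ • u x‖ₑ ≤ ∫⁻ t in Ioi (1 : ℝ), ‖fderiv ℝ u (t • x)‖ₑ := by
  rcases eq_or_ne x 0 with rfl | hx
  · simp
  have deriv_ray (t : ℝ) : deriv (fun s : ℝ ↦ u (s • x)) t = fderiv ℝ u (t • x) x := by
    have hray : HasDerivAt (fun s : ℝ ↦ s • x) x t := by
      simpa using (hasDerivAt_id t).smul_const x
    exact ((hu.differentiable one_ne_zero _).hasFDerivAt.comp_hasDerivAt t hray).deriv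
  have enorm_le : ‖u x‖ₑ ≤ ‖x‖ₑ * ∫⁻ t in Ioi (1 : ℝ), ‖fderiv ℝ u (t • x)‖ₑ := calc
    ‖u x‖ₑ ≤ ∫⁻ t in Ioi (1 : ℝ), ‖deriv (fun s : ℝ ↦ u (s • x)) t‖ₑ := by
      simpa using enorm_le_lintegral_Ioi_deriv (f := fun s : ℝ ↦ u (s • x))
        (hu.comp (by fun_prop)) (h2u.comp_isClosedEmbedding (isClosedEmbedding_smul_left hx)) 1
    _ ≤ ∫⁻ t in Ioi (1 : ℝ), ‖x‖ₑ * ‖fderiv ℝ u (t • x)‖ₑ := by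
      gcongr with t
      rw [deriv_ray, mul_comm]
      exact (fderiv ℝ u (t • x)).le_opENorm x
    _ = ‖x‖ₑ * ∫⁻ t in Ioi (1 : ℝ), ‖fderiv ℝ u (t • x)‖ₑ :=
      lintegral_const_mul' _ _ enorm_ne_top
  rw [enorm_smul, enorm_inv (norm_ne_zero_iff.2 hx), enorm_norm, mul_comm, ← div_eq_mul_inv]
  exact ENNReal.div_le_of_le_mul' enorm_le

end Calculus

section Haar

variable {E F : Type*} [NormedAddCommGroup E] [NormedSpace ℝ E] [FiniteDimensional ℝ E]
  [MeasurableSpace E] [BorelSpace E] (μ : Measure E) [μ.IsAddHaarMeasure] [NormedAddCommGroup F]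

theorem eLpNorm_comp_smul (f : E → F) (p : ℝ≥0∞) {r : ℝ} (hr : r ≠ 0) :
    eLpNorm (fun x ↦ f (r • x)) p μ =
      ENNReal.ofReal |(r ^ finrank ℝ E)⁻¹| ^ (1 / p).toReal * eLpNorm f p μ := by
  have hembed : MeasurableEmbedding fun x : E ↦ r • x :=
    (Homeomorph.smulOfNeZero r hr).measurableEmbedding
  rw [← smul_eq_mul, ← eLpNorm_smul_measure_of_ne_zero (by simp [hr]),
    ← Measure.map_addHaar_smul μ hr, hembed.eLpNorm_map_measure]
  rfl

theorem eLpNorm_comp_pos_smul (f : E → F) (p : ℝ≥0) {r : ℝ} (hr : 0 < r) :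
    eLpNorm (fun x ↦ f (r • x)) p μ =
      ENNReal.ofReal (r ^ (-(finrank ℝ E / p : ℝ))) * eLpNorm f p μ := by
  rw [eLpNorm_comp_smul μ f p hr.ne', abs_of_pos (by positivity),
    ENNReal.ofReal_rpow_of_nonneg (by positivity) ENNReal.toReal_nonneg, ← Real.rpow_natCast,
    ← Real.rpow_neg hr.le, ← Real.rpow_mul hr.le]
  simp [div_eq_mul_inv]

variable [NormedSpace ℝ F] {u : E → F}

theorem eLpNorm_inv_norm_smul_le_eLpNorm_fderiv {p : ℝ≥0} (hp : 1 ≤ p) (hpE : p < finrank ℝ E)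
    (hu : ContDiff ℝ 1 u) (h2u : HasCompactSupport u) :
    eLpNorm (fun x ↦ ‖x‖⁻¹ • u x) p μ ≤
      ENNReal.ofReal (p / (finrank ℝ E - p)) * eLpNorm (fderiv ℝ u) p μ := by
  have hp₀ : (0 : ℝ) < p := by exact_mod_cast one_pos.trans_le hp
  have hpE' : (p : ℝ) < finrank ℝ E := by exact_mod_cast hpE
  have hmeas : Measurable (Function.uncurry fun (x : E) (t : ℝ) ↦ ‖fderiv ℝ u (t • x)‖ₑ) :=
    ((hu.continuous_fderiv one_ne_zero).comp (continuous_snd.smul continuous_fst)).enorm.measurable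
  calc
    eLpNorm (fun x ↦ ‖x‖⁻¹ • u x) p μ
      ≤ eLpNorm (fun x ↦ ∫⁻ t in Ioi (1 : ℝ), ‖fderiv ℝ u (t • x)‖ₑ) p μ :=
        eLpNorm_mono_enorm fun x ↦ enorm_inv_norm_smul_le_lintegral_fderiv hu h2u x
    _ ≤ ∫⁻ t in Ioi (1 : ℝ), eLpNorm (fun x ↦ ‖fderiv ℝ u (t • x)‖ₑ) p μ :=
        eLpNorm_lintegral_le hp hmeas
    _ = ∫⁻ t in Ioi (1 : ℝ),
          ENNReal.ofReal (t ^ (-(finrank ℝ E / p : ℝ))) * eLpNorm (fderiv ℝ u) p μ :=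
        setLIntegral_congr_fun measurableSet_Ioi fun t ht ↦ by
          rw [← eLpNorm_comp_pos_smul μ _ p (one_pos.trans ht)]
          exact eLpNorm_congr_enorm_ae (.of_forall fun x ↦ enorm_enorm _)
    _ = ENNReal.ofReal (p / (finrank ℝ E - p)) * eLpNorm (fderiv ℝ u) p μ := by
        have hlt : -(finrank ℝ E / p : ℝ) < -1 := neg_lt_neg ((one_lt_div hp₀).2 hpE')
        have hconst : -(1 : ℝ) ^ (-(finrank ℝ E / p : ℝ) + 1) / (-(finrank ℝ E / p : ℝ) + 1) =
            p / (finrank ℝ E - p) := by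
          rw [Real.one_rpow, neg_add_eq_sub, ← neg_div_neg_eq, neg_neg, neg_sub,
            div_sub_one hp₀.ne', one_div_div]
        rw [lintegral_mul_const _ (by fun_prop), lintegral_Ioi_ofReal_rpow_of_lt hlt one_pos,
          hconst]

end Haar

section Bochner

variable {α F G : Type*} {m : MeasurableSpace α} {μ : Measure α} [NormedAddCommGroup F]
  [NormedAddCommGroup G] {f : α → F} {g : α → G} {p : ℝ≥0}

theorem lpNorm_rpow_eq_integral_norm_rpow (hp : p ≠ 0) (hf : AEStronglyMeasurable f μ) :
    lpNorm f p μ ^ (p : ℝ) = ∫ x, ‖f x‖ ^ (p : ℝ) ∂μ := by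
  rw [lpNorm_nnreal_eq_integral_norm_rpow hp hf,
    Real.rpow_inv_rpow (by positivity) (by exact_mod_cast hp)]

theorem integral_norm_rpow_le_of_eLpNorm_le (hp : p ≠ 0) {C : ℝ} (hC : 0 ≤ C)
    (hf : AEStronglyMeasurable f μ) (hg : MemLp g p μ)
    (hfg : eLpNorm f p μ ≤ ENNReal.ofReal C * eLpNorm g p μ) :
    ∫ x, ‖f x‖ ^ (p : ℝ) ∂μ ≤ C ^ (p : ℝ) * ∫ x, ‖g x‖ ^ (p : ℝ) ∂μ := by
  have hle : lpNorm f p μ ≤ C * lpNorm g p μ := by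
    rw [← toReal_eLpNorm hf]
    refine ENNReal.toReal_le_of_le_ofReal (mul_nonneg hC lpNorm_nonneg) ?_
    rwa [ENNReal.ofReal_mul hC, ofReal_lpNorm hg]
  rw [← lpNorm_rpow_eq_integral_norm_rpow hp hf,
    ← lpNorm_rpow_eq_integral_norm_rpow hp hg.aestronglyMeasurable,
    ← Real.mul_rpow hC lpNorm_nonneg]
  exact Real.rpow_le_rpow lpNorm_nonneg hle p.2

end Bochner

theorem classical_hardy_inequality_general {E F : Type*}
    [NormedAddCommGroup E] [NormedSpace ℝ E] [FiniteDimensional ℝ E]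
    [MeasurableSpace E] [BorelSpace E] (μ : Measure E) [μ.IsAddHaarMeasure]
    [NormedAddCommGroup F] [NormedSpace ℝ F] {p : ℝ} (hp : 1 ≤ p) (hpE : p < finrank ℝ E)
    {u : E → F} (hu : ContDiff ℝ 1 u) (h2u : HasCompactSupport u) :
    ∫ x, ‖u x‖ ^ p / ‖x‖ ^ p ∂μ ≤
      (p / (finrank ℝ E - p)) ^ p * ∫ x, ‖fderiv ℝ u x‖ ^ p ∂μ := by
  lift p to ℝ≥0 using zero_le_one.trans hp
  have hp₀ : p ≠ 0 := (one_pos.trans_le (by exact_mod_cast hp)).ne'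
  have hC : 0 ≤ (p / (finrank ℝ E - p) : ℝ) := div_nonneg p.2 (sub_nonneg.2 hpE.le)
  have hu' : MemLp (fderiv ℝ u) p μ :=
    (hu.continuous_fderiv one_ne_zero).memLp_of_hasCompactSupport (h2u.fderiv ℝ)
  have hquot : AEStronglyMeasurable (fun x ↦ ‖x‖⁻¹ • u x) μ :=
    measurable_norm.inv.aestronglyMeasurable.smul hu.continuous.aestronglyMeasurable
  calc
    ∫ x, ‖u x‖ ^ (p : ℝ) / ‖x‖ ^ (p : ℝ) ∂μ = ∫ x, ‖‖x‖⁻¹ • u x‖ ^ (p : ℝ) ∂μ := by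
      congr! 2 with x
      rw [norm_smul, norm_inv, norm_norm, inv_mul_eq_div, Real.div_rpow] <;> positivity
    _ ≤ (p / (finrank ℝ E - p) : ℝ) ^ (p : ℝ) * ∫ x, ‖fderiv ℝ u x‖ ^ (p : ℝ) ∂μ :=
      integral_norm_rpow_le_of_eLpNorm_le hp₀ hC hquot hu'
        (eLpNorm_inv_norm_smul_le_eLpNorm_fderiv μ (by exact_mod_cast hp) (by exact_mod_cast hpE)
          hu h2u)

theorem classical_hardy_inequality (N : ℕ) (hN : 2 ≤ N)
    (p : ℝ) (hp1 : 1 < p) (hpN : p < N)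
    (u : EuclideanSpace ℝ (Fin N) → ℝ) (husm : ContDiff ℝ (⊤ : ℕ∞) u)
    (husupp : HasCompactSupport u) :
    ∫ x, |u x| ^ p / ‖x‖ ^ p ≤ (p / (N - p)) ^ p * ∫ x, ‖fderiv ℝ u x‖ ^ p := by
  simpa using classical_hardy_inequality_general volume hp1.le (by simpa using hpN)
    (husm.of_le (by exact_mod_cast le_top)) husupp
end
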